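/- arXiv:2203.00615 — 4 statements merged into one kernel-verified Lean document; each statement's English description precedes it below -/
import Mathlib

section
/- If θ is a regular infinite cardinal and X is a set with θ ≤ |X| and |X|^{<θ} = |X| (i.e., [X]^{<θ} has cardinality |X|), then C_{[X]^{<θ}} ≅T ⟨[X]^{<θ}, ⊆⟩. -/
open Cardinal

universe u v u' v'

/-- `F ⊆ X` is bounded with respect to the relational system `⟨X, Y, R⟩`:
some `y ∈ Y` satisfies `R x y` for all `x ∈ F`. -/
def RelBounded {X : Type u} {Y : Type v} (R : X → Y → Prop) (F : Set X) : Prop :=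
  ∃ y : Y, ∀ x ∈ F, R x y

/-- `E ⊆ Y` is dominating with respect to the relational system `⟨X, Y, R⟩`. -/
def RelDominating {X : Type u} {Y : Type v} (R : X → Y → Prop) (E : Set Y) : Prop :=
  ∀ x : X, ∃ y ∈ E, R x y

/-- The unbounding number `𝔟(R)`: the least cardinality of an `R`-unbounded set
(`⊤` when every set is `R`-bounded). -/
noncomputable def relb {X Y : Type u} (R : X → Y → Prop) : WithTop Cardinal.{u} :=
  sInf { c : WithTop Cardinal.{u} | ∃ F : Set X, ¬ RelBounded R F ∧ c = ↑(#F) }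

/-- The dominating number `𝔡(R)`: the least cardinality of an `R`-dominating set
(`⊤` when there is no `R`-dominating set). -/
noncomputable def reld {X Y : Type u} (R : X → Y → Prop) : WithTop Cardinal.{u} :=
  sInf { c : WithTop Cardinal.{u} | ∃ E : Set Y, RelDominating R E ∧ c = ↑(#E) }

/-- The dual relational system `R^⊥ = ⟨Y, X, ⊏^⊥⟩`, `y ⊏^⊥ x ↔ ¬ x ⊏ y`. -/
def RelDual {X : Type u} {Y : Type v} (R : X → Y → Prop) : Y → X → Prop := fun y x => ¬ R x y

/-- The Tukey order: there is a Tukey connection `(f, g) : R → R'`. -/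
def TukeyLE {X : Type u} {Y : Type v} {X' : Type u'} {Y' : Type v'}
    (R : X → Y → Prop) (R' : X' → Y' → Prop) : Prop :=
  ∃ (f : X → X') (g : Y' → Y), ∀ x y', R' (f x) y' → R x (g y')

/-- Tukey equivalence. -/
def TukeyEquiv {X : Type u} {Y : Type v} {X' : Type u'} {Y' : Type v'}
    (R : X → Y → Prop) (R' : X' → Y' → Prop) : Prop :=
  TukeyLE R R' ∧ TukeyLE R' R

/-- The additivity of a family `I` of subsets of `α`. -/
noncomputable def idealAdd {α : Type u} (I : Set (Set α)) : Cardinal.{u} :=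
  sInf { c : Cardinal.{u} | ∃ J : Set (Set α), J ⊆ I ∧ ⋃₀ J ∉ I ∧ c = #J }

/-- The covering number of a family `I` of subsets of `α`. -/
noncomputable def idealCov {α : Type u} (I : Set (Set α)) : Cardinal.{u} :=
  sInf { c : Cardinal.{u} | ∃ J : Set (Set α), J ⊆ I ∧ ⋃₀ J = Set.univ ∧ c = #J }

/-- The uniformity of a family `I` of subsets of `α`. -/
noncomputable def idealNon {α : Type u} (I : Set (Set α)) : Cardinal.{u} :=
  sInf { c : Cardinal.{u} | ∃ A : Set α, A ∉ I ∧ c = #A }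

/-- The cofinality of a family `I` of subsets of `α`. -/
noncomputable def idealCof {α : Type u} (I : Set (Set α)) : Cardinal.{u} :=
  sInf { c : Cardinal.{u} | ∃ J : Set (Set α), J ⊆ I ∧ (∀ A ∈ I, ∃ B ∈ J, A ⊆ B) ∧ c = #J }

/-- If `θ` is regular infinite, `θ ≤ |X|` and `|X|^{<θ} = |X|`
(i.e. `[X]^{<θ}` has cardinality `|X|`), then `C_{[X]^{<θ}} ≅T ⟨[X]^{<θ}, ⊆⟩`. -/
theorem stmt11 {X : Type u} (θ : Cardinal.{u}) (hreg : θ.IsRegular) (hXθ : θ ≤ #X)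
    (hsmall : #{A : Set X | #A < θ} = #X) :
    TukeyEquiv (fun (x : X) (A : {A : Set X // #A < θ}) => x ∈ A.1)
               (fun (A B : {A : Set X // #A < θ}) => A.1 ⊆ B.1) := by
  constructor
  · refine ⟨fun x => ⟨{x}, ?_⟩, id, fun x B h => h rfl⟩
    rw [mk_singleton]
    exact one_lt_aleph0.trans_le hreg.aleph0_le
  · obtain ⟨e⟩ := Cardinal.eq.1 hsmall
    -- The map `A ↦ e A` is paired with `B ↦ ⋃ (e A ∈ B), A`, which is small by regularity.
    refine ⟨e, fun B => ⟨⋃ b : B.1, (e.symm b.1).1, ?_⟩, fun A B h => ?_⟩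
    · exact (mk_iUnion_le_sum_mk).trans_lt
        (sum_lt_of_isRegular hreg B.2 fun b => (e.symm b.1).2)
    · refine Set.subset_iUnion_of_subset ⟨e A, h⟩ ?_
      exact (congrArg Subtype.val (e.symm_apply_apply A)).ge
end

section
/- Let R = ⟨X, Y, ⊏⟩ be a Polish relational system. Then ⟨X, M(X), ∈⟩ ≼T R, where M(X) is the σ-ideal of meager subsets of X. Consequently b(R) ≤ non(M(X)) and cov(M(X)) ≤ d(R). -/
open Cardinal

universe u v u' v'

/-- For a Polish relational system `R = ⟨X, Y, ⊏⟩` (with `X` a nonempty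
perfect Polish space, `Y` a nonempty analytic subset of a Polish space `Z`, and `⊏`
an increasing union of closed sets `C n ⊆ X × Z` whose sections at points of `Y` are
closed nowhere dense), `⟨X, M(X), ∈⟩ ≼T R`; consequently `𝔟(R) ≤ non(M(X))` and
`cov(M(X)) ≤ 𝔡(R)`, where `M(X)` is the meager ideal of `X`. -/
theorem stmt15 {X Z : Type u} [Nonempty X] [TopologicalSpace X] [PolishSpace X]
    [TopologicalSpace Z] [PolishSpace Z]
    (hperf : Perfect (Set.univ : Set X))
    (Y : Set Z) (hYne : Y.Nonempty) (hYan : MeasureTheory.AnalyticSet Y)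
    (R : X → Z → Prop)
    (C : ℕ → Set (X × Z)) (hmono : Monotone C) (hclosed : ∀ n, IsClosed (C n))
    (hsec : ∀ n, ∀ y ∈ Y, IsClosed {x : X | (x, y) ∈ C n} ∧
      IsNowhereDense {x : X | (x, y) ∈ C n})
    (hR : ∀ (x : X) (z : Z), R x z ↔ ∃ n, (x, z) ∈ C n) :
    TukeyLE (fun (x : X) (A : {A : Set X // IsMeagre A}) => x ∈ A.1)
      (fun (x : X) (y : Y) => R x (y : Z)) ∧
    relb (fun (x : X) (y : Y) => R x (y : Z)) ≤ ↑(idealNon {A : Set X | IsMeagre A}) ∧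
    ↑(idealCov {A : Set X | IsMeagre A}) ≤ reld (fun (x : X) (y : Y) => R x (y : Z)) := by
  have hmeagre : ∀ y : Y, IsMeagre {x : X | R x y} := by
    intro y
    have : {x : X | R x y} = ⋃ n, {x : X | (x, (y : Z)) ∈ C n} := by
      ext x
      simp [hR]
    rw [this]
    exact isMeagre_iUnion fun n => (hsec n y y.2).2.isMeagre
  refine ⟨⟨id, fun y => ⟨{x : X | R x y}, hmeagre y⟩, fun x y h => h⟩, ?_, ?_⟩
  · have hne : {c : Cardinal.{u} | ∃ A : Set X, A ∉ {A : Set X | IsMeagre A} ∧ c = #A}.Nonempty :=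
      ⟨_, Set.univ, not_isMeagre_of_isOpen isOpen_univ Set.univ_nonempty, rfl⟩
    obtain ⟨A, hA, hcard⟩ := csInf_mem hne
    refine csInf_le (OrderBot.bddBelow _) ⟨A, ?_, congrArg _ hcard⟩
    rintro ⟨y, hy⟩
    exact hA ((hmeagre y).mono hy)
  · refine le_sInf ?_
    rintro _ ⟨E, hE, rfl⟩
    refine WithTop.coe_le_coe.2 (le_trans (csInf_le (OrderBot.bddBelow _)
      ⟨(fun y : Y => {x : X | R x y}) '' E, ?_, ?_, rfl⟩) Cardinal.mk_image_le)
    · rintro _ ⟨y, -, rfl⟩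
      exact hmeagre y
    · refine Set.eq_univ_of_forall fun x => ?_
      obtain ⟨y, hy, hxy⟩ := hE x
      exact ⟨_, ⟨y, hy, rfl⟩, hxy⟩
end

section
/- The relational system Mg := ⟨2^ω, Ξ, ∈•⟩ is Tukey equivalent to C_M := ⟨2^ω, M, ∈⟩, where M is the σ-ideal of meager subsets of Cantor space 2^ω. Consequently b(Mg) = non(M) and d(Mg) = cov(M). -/
open Cardinal

universe u v u' v'

/-- `l` is an initial segment of the infinite binary sequence `x`. -/
def ListPrefixOfSeq (l : List Bool) (x : ℕ → Bool) : Prop :=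
  ∀ (i : ℕ) (h : i < l.length), l.get ⟨i, h⟩ = x i

/-- The set `Ξ` of functions `f : 2^{<ω} → 2^{<ω}` with `s ⊆ f s` for all `s`. -/
def XiSet : Set (List Bool → List Bool) := {f | ∀ s : List Bool, s <+: f s}

/-- The relational system `Mg = ⟨2^ω, Ξ, ∈•⟩`:
`x ∈• f` iff `{s : f s is an initial segment of x}` is finite. -/
def MgRel (x : ℕ → Bool) (f : XiSet) : Prop :=
  {s : List Bool | ListPrefixOfSeq ((f : List Bool → List Bool) s) x}.Finite

theorem TukeyLE.relb_le {X Y X' Y' : Type u} {R : X → Y → Prop} {R' : X' → Y' → Prop}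
    (h : TukeyLE R R') : relb R' ≤ relb R := by
  obtain ⟨f, g, hfg⟩ := h
  refine le_sInf ?_
  rintro c ⟨F, hF, rfl⟩
  refine le_trans (sInf_le ⟨f '' F, ?_, rfl⟩) (WithTop.coe_le_coe.2 mk_image_le)
  rintro ⟨y, hy⟩
  exact hF ⟨g y, fun x hx => hfg x y (hy _ ⟨x, hx, rfl⟩)⟩

theorem TukeyLE.reld_le {X Y X' Y' : Type u} {R : X → Y → Prop} {R' : X' → Y' → Prop}
    (h : TukeyLE R R') : reld R ≤ reld R' := by
  obtain ⟨f, g, hfg⟩ := h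
  refine le_sInf ?_
  rintro c ⟨E, hE, rfl⟩
  refine le_trans (sInf_le ⟨g '' E, ?_, rfl⟩) (WithTop.coe_le_coe.2 mk_image_le)
  intro x
  obtain ⟨y, hy, hxy⟩ := hE (f x)
  exact ⟨g y, ⟨y, hy, rfl⟩, hfg x y hxy⟩

/-- The unbounding number of `⟨α, I, ∈⟩` is the uniformity of `I`, for `I` a proper family closed
under subsets. -/
theorem relb_mem_eq_idealNon {α : Type u} {P : Set α → Prop}
    (mono : ∀ {A B : Set α}, P B → A ⊆ B → P A) (hP : ¬ P Set.univ) :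
    relb (fun (x : α) (A : {A : Set α // P A}) => x ∈ A.1) = ↑(idealNon {A : Set α | P A}) := by
  have key (F : Set α) : RelBounded (fun (x : α) (A : {A : Set α // P A}) => x ∈ A.1) F ↔ P F :=
    ⟨fun ⟨A, hA⟩ => mono A.2 hA, fun h => ⟨⟨F, h⟩, fun _ => id⟩⟩
  simp only [relb, key]
  apply le_antisymm
  · have hne : {c : Cardinal.{u} | ∃ A : Set α, A ∉ {A : Set α | P A} ∧ c = #A}.Nonempty :=
      ⟨_, Set.univ, hP, rfl⟩
    obtain ⟨A, hA, h⟩ := csInf_mem hne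
    exact sInf_le ⟨A, hA, congrArg _ h⟩
  · refine le_sInf ?_
    rintro c ⟨F, hF, rfl⟩
    exact WithTop.coe_le_coe.2 (csInf_le' ⟨F, hF, rfl⟩)

/-- The dominating number of `⟨α, I, ∈⟩` is the covering number of `I`, for `I` covering `α`. -/
theorem reld_mem_eq_idealCov {α : Type u} {P : Set α → Prop} (hP : ∀ x : α, ∃ A, P A ∧ x ∈ A) :
    reld (fun (x : α) (A : {A : Set α // P A}) => x ∈ A.1) = ↑(idealCov {A : Set α | P A}) := by
  apply le_antisymm
  · have hne : {c : Cardinal.{u} | ∃ J : Set (Set α),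
        J ⊆ {A : Set α | P A} ∧ ⋃₀ J = Set.univ ∧ c = #J}.Nonempty :=
      ⟨_, {A | P A}, subset_rfl, Set.eq_univ_of_forall hP, rfl⟩
    obtain ⟨J, hJ, hcov, h⟩ := csInf_mem hne
    rw [idealCov, h]
    refine le_trans (sInf_le ⟨Subtype.val ⁻¹' J, ?_, rfl⟩)
      (WithTop.coe_le_coe.2 (mk_preimage_of_injective _ _ Subtype.val_injective))
    intro x
    obtain ⟨A, hA, hx⟩ := Set.mem_sUnion.1 (hcov ▸ Set.mem_univ x)
    exact ⟨⟨A, hJ hA⟩, hA, hx⟩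
  · refine le_sInf ?_
    rintro c ⟨E, hE, rfl⟩
    refine WithTop.coe_le_coe.2 (le_trans (csInf_le' ⟨Subtype.val '' E, ?_, ?_, rfl⟩) mk_image_le)
    · rintro _ ⟨A, -, rfl⟩
      exact A.2
    · refine Set.eq_univ_of_forall fun x => ?_
      obtain ⟨A, hA, hx⟩ := hE x
      exact ⟨A, ⟨A, hA, rfl⟩, hx⟩

theorem isOpen_setOf_listPrefixOfSeq (l : List Bool) : IsOpen {x | ListPrefixOfSeq l x} := by
  have : {x | ListPrefixOfSeq l x} =
      ⋂ i : Fin l.length, (fun x : ℕ → Bool => x i) ⁻¹' {l.get i} := by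
    ext x
    simp [ListPrefixOfSeq, Fin.forall_iff, eq_comm]
  rw [this]
  exact isOpen_iInter_of_finite fun i => (isOpen_discrete _).preimage (continuous_apply _)

theorem exists_listPrefixOfSeq (l : List Bool) : ∃ x, ListPrefixOfSeq l x :=
  ⟨fun i => l.getD i false, fun i h => by simp [h]⟩

theorem listPrefixOfSeq_map_range {n : ℕ} {x y : ℕ → Bool} :
    ListPrefixOfSeq ((List.range n).map x) y ↔ ∀ i < n, x i = y i := by
  simp [ListPrefixOfSeq]

theorem ListPrefixOfSeq.prefix_map_range {l : List Bool} {x : ℕ → Bool} (h : ListPrefixOfSeq l x)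
    {n : ℕ} (hn : l.length ≤ n) : l <+: (List.range n).map x := by
  rw [List.prefix_iff_getElem]
  exact ⟨by simpa using hn, fun i hi => by simpa using h i hi⟩

theorem ListPrefixOfSeq.of_prefix {l l' : List Bool} {x : ℕ → Bool} (h : ListPrefixOfSeq l' x)
    (hl : l <+: l') : ListPrefixOfSeq l x := by
  intro i hi
  rw [← h i (hi.trans_le hl.length_le)]
  simpa using hl.getElem hi

theorem IsOpen.exists_forall_lt_eq {U : Set (ℕ → Bool)} (hU : IsOpen U) {x : ℕ → Bool}
    (hx : x ∈ U) : ∃ n, ∀ y, (∀ i < n, x i = y i) → y ∈ U := by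
  obtain ⟨I, u, hu, hsub⟩ := isOpen_pi_iff.1 hU x hx
  refine ⟨I.sup id + 1, fun y hy => hsub fun i hi => ?_⟩
  rw [← hy i (Nat.lt_succ_of_le (Finset.le_sup (f := id) hi))]
  exact (hu i hi).2

theorem isMeagre_setOf_mgRel (f : XiSet) : IsMeagre {x | MgRel x f} := by
  let G : ℕ → Set (ℕ → Bool) := fun n =>
    ⋃ s ∈ {s : List Bool | n ≤ s.length}, {x | ListPrefixOfSeq (f.1 s) x}
  have hopen (n : ℕ) : IsOpen (G n) :=
    isOpen_biUnion fun s _ => isOpen_setOf_listPrefixOfSeq _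
  have hdense (n : ℕ) : Dense (G n) := by
    rw [dense_iff_inter_open]
    rintro U hU ⟨x, hx⟩
    obtain ⟨m, hm⟩ := hU.exists_forall_lt_eq hx
    obtain ⟨y, hy⟩ := exists_listPrefixOfSeq (f.1 ((List.range (max m n)).map x))
    refine ⟨y, hm y fun i hi => ?_, Set.mem_biUnion (by simp) hy⟩
    exact listPrefixOfSeq_map_range.1 (hy.of_prefix (f.2 _)) i (hi.trans_le (le_max_left _ _))
  refine Filter.mem_of_superset
    (countable_iInter_mem.2 fun n => residual_of_dense_open (hopen n) (hdense n)) ?_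
  intro x hx hfin
  obtain ⟨N, hN⟩ := (hfin.image List.length).bddAbove
  obtain ⟨s, hs, hsx⟩ := Set.mem_iUnion₂.1 (Set.mem_iInter.1 hx (N + 1))
  exact absurd (hN ⟨s, hsx, rfl⟩) (not_le.2 hs)

theorem IsMeagre.exists_mgRel {A : Set (ℕ → Bool)} (hA : IsMeagre A) :
    ∃ f : XiSet, ∀ x ∈ A, MgRel x f := by
  obtain ⟨S, hSo, hSd, hSc, hSA⟩ := mem_residual_iff.1 hA
  obtain ⟨U, hU⟩ := (hSc.insert Set.univ).exists_eq_range (Set.insert_nonempty _ _)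
  have hUmem (n : ℕ) : U n ∈ insert Set.univ S := hU ▸ Set.mem_range_self n
  have hUo (n : ℕ) : IsOpen (U n) := by
    rcases hUmem n with h | h
    · exact h ▸ isOpen_univ
    · exact hSo _ h
  have hUd (n : ℕ) : Dense (U n) := by
    rcases hUmem n with h | h
    · exact h ▸ dense_univ
    · exact hSd _ h
  have step (s : List Bool) : ∃ t, s <+: t ∧
      ∀ x, ListPrefixOfSeq t x → ∀ i ≤ s.length, x ∈ U i := by
    have hVo : IsOpen (⋂ i ∈ Set.Iic s.length, U i) :=
      (Set.finite_Iic _).isOpen_biInter fun i _ => hUo i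
    have hVd : Dense (⋂ i ∈ Set.Iic s.length, U i) :=
      dense_biInter_of_isOpen (fun i _ => hUo i) (Set.to_countable _) fun i _ => hUd i
    obtain ⟨x, hsx, hxV⟩ := hVd.inter_open_nonempty _ (isOpen_setOf_listPrefixOfSeq s)
      (exists_listPrefixOfSeq s)
    obtain ⟨m, hm⟩ := hVo.exists_forall_lt_eq hxV
    refine ⟨(List.range (max m s.length)).map x, hsx.prefix_map_range (le_max_right _ _),
      fun y hy i hi => Set.mem_iInter₂.1 (hm y fun j hj => ?_) i hi⟩
    exact listPrefixOfSeq_map_range.1 hy j (hj.trans_le (le_max_left _ _))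
  choose f hsf hf using step
  refine ⟨⟨f, hsf⟩, fun x hx => ?_⟩
  have hxS : x ∉ ⋂₀ S := fun h => hSA h hx
  obtain ⟨t, htS, hxt⟩ : ∃ t ∈ S, x ∉ t := by simpa using hxS
  obtain ⟨n, rfl⟩ : t ∈ Set.range U := hU ▸ Set.mem_insert_of_mem _ htS
  refine (List.finite_length_lt Bool n).subset fun s hs => ?_
  by_contra hn
  exact hxt (hf s x hs n (not_lt.1 hn))

theorem exists_mgRel (x : ℕ → Bool) : ∃ f : XiSet, MgRel x f := by
  refine ⟨⟨fun s => s ++ [!x s.length], fun s => List.prefix_append _ _⟩, ?_⟩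
  refine Set.finite_empty.subset fun s hs => ?_
  simpa using hs s.length (by simp)

theorem tukeyEquiv_mgRel_mem_isMeagre :
    TukeyEquiv MgRel
      (fun (x : ℕ → Bool) (A : {A : Set (ℕ → Bool) // IsMeagre A}) => x ∈ A.1) := by
  constructor
  · choose g hg using fun A : {A : Set (ℕ → Bool) // IsMeagre A} => A.2.exists_mgRel
    exact ⟨id, g, fun x A hx => hg A x hx⟩
  · exact ⟨id, fun f => ⟨_, isMeagre_setOf_mgRel f⟩, fun _ _ => id⟩

/-- `Mg ≅T C_M = ⟨2^ω, M, ∈⟩` where `M` is the meager ideal of Cantor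
space `2^ω`; consequently `𝔟(Mg) = non(M)` and `𝔡(Mg) = cov(M)`. -/
theorem stmt16 :
    TukeyEquiv MgRel
      (fun (x : ℕ → Bool) (A : {A : Set (ℕ → Bool) // IsMeagre A}) => x ∈ A.1) ∧
    relb MgRel = ↑(idealNon {A : Set (ℕ → Bool) | IsMeagre A}) ∧
    reld MgRel = ↑(idealCov {A : Set (ℕ → Bool) | IsMeagre A}) := by
  obtain ⟨h, h'⟩ := tukeyEquiv_mgRel_mem_isMeagre
  refine ⟨⟨h, h'⟩, ?_, ?_⟩
  · rw [← relb_mem_eq_idealNon (P := IsMeagre) (fun hB hAB => hB.mono hAB)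
      (not_isMeagre_of_isOpen isOpen_univ Set.univ_nonempty)]
    exact le_antisymm h'.relb_le h.relb_le
  · rw [← reld_mem_eq_idealCov (P := IsMeagre) fun x =>
      let ⟨f, hf⟩ := exists_mgRel x
      ⟨_, isMeagre_setOf_mgRel f, hf⟩]
    exact le_antisymm h.reld_le h'.reld_le
end

section
/- Let ⟨T, ≤T⟩ be a directed preorder and let ⟨N_t : t ∈ T⟩ be a family of sets that is monotone (t ≤T t' implies N_t ⊆ N_{t'}); set N := ⋃_{t∈T} N_t. Let K = ⟨A, B, ⊲⟩ be a relational system with A ∩ N nonempty, and assume that for every t ∈ T there exists y ∈ B ∩ N with x ⊲ y for all x ∈ A ∩ N_t (i.e., A ∩ N_t is (K ∩ N)-bounded). Then K ∩ N := ⟨A ∩ N, B ∩ N, ⊲⟩ ≼T ⟨T, T, ≤T⟩. -/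
open Cardinal

universe u v u' v'

/-- Let `T` be a directed preorder and `⟨N_t : t ∈ T⟩` a monotone family of
sets with union `N`. If `K = ⟨A, B, ⊲⟩` is a relational system with `A ∩ N` nonempty such
that each `A ∩ N_t` is `(K ∩ N)`-bounded, then `K ∩ N ≼T ⟨T, T, ≤⟩`. -/
theorem stmt18 {T : Type u} [Preorder T] {α : Type v}
    (hdir : ∀ s t : T, ∃ w : T, s ≤ w ∧ t ≤ w)
    (Nfam : T → Set α) (hmono : ∀ ⦃s t : T⦄, s ≤ t → Nfam s ⊆ Nfam t)
    (A B : Set α) (lhd : α → α → Prop)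
    (hAne : (A ∩ ⋃ t : T, Nfam t).Nonempty)
    (hbd : ∀ t : T, ∃ y ∈ B ∩ ⋃ w : T, Nfam w, ∀ x ∈ A ∩ Nfam t, lhd x y) :
    TukeyLE
      (fun (x : ↥(A ∩ ⋃ t : T, Nfam t)) (y : ↥(B ∩ ⋃ t : T, Nfam t)) => lhd x y)
      (fun s t : T => s ≤ t) := by
  choose g hgB hg using hbd
  have hf : ∀ x : ↥(A ∩ ⋃ t : T, Nfam t), ∃ t, (x : α) ∈ Nfam t :=
    fun x => Set.mem_iUnion.mp x.2.2
  choose f hf using hf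
  exact ⟨f, fun t => ⟨g t, hgB t⟩, fun x t hxt => hg t x ⟨x.2.1, hmono hxt (hf x)⟩⟩
end
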